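/- arXiv:2407.16120 — 2 statements merged into one kernel-verified Lean document; each statement's English description precedes it below -/
import Mathlib

section
/- Let a ∈ (0, 1/3] and I_a := (1−2a, 1−a). Let n ≥ 0 and 0 ≤ k ≤ n be integers, M ≥ 1, and let P be a polynomial of the form P(x) = Σ_{j=k}^{n} b_j a_j x^j with a_j ∈ [1, M], b_j ∈ {−1, 0, 1} for all j, and b_k ∈ {−1, 1}. Then the geometric mean of |P| on I_a satisfies ‖P‖_{L_0(I_a)} := exp( (1/a) ∫_{1−2a}^{1−a} log|P(x)| dx ) ≥ (1−2a)^k · exp( −c_1 log(4M)/a ), where c_1 := 9π/√2. -/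
/-!
Write `P = x ^ k * Q`; since `x ≥ 1 - 2 * a` on the interval, it is enough to bound the integral of
`log |Q|` from below. On the open unit disc `|Q x| ≤ M / (1 - |x|)`, and on the smaller disc
`|x - 1/3| ≤ 2/3` one has `|1 - x| ^ 2 ≤ 4 * (1 - |x|)`, so `(1 - x) ^ 2 * Q x / (4 * M)` is bounded
by `1` there. The map `x = u / (2 - u)` turns it into a function `f` on the unit disc with
`|f| ≤ 1` and `|f 0| ≥ 1 / (4 * M)`.

Divide `f` by the Blaschke factors of its zeros `ζ`. By Harnack's inequality the zero-free quotient
`B` satisfies `log |B u| ≥ (1 + |u|) / (1 - |u|) * log |B 0|`, and `(1 + |u|) / (1 - |u|) ≤ 4 / a`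
on the interval. The factor of `ζ` costs the integral of the Green function of the disc with pole
`ζ`, which is at most `9 * (1 - |ζ| ^ 2) ≤ -18 * log |ζ|`: its logarithmic singularity is dominated
by an inverse square root. The total loss is then at most `18 * log (1 / |f 0|)`, because
`log |f 0| = log |B 0| + ∑ log |ζ|`.
-/

open Complex Metric MeasureTheory Filter Topology Set
open scoped ComplexConjugate

/-! ### Harnack's inequality and Blaschke division -/

lemma harnack_of_nonpos_of_closedBall {u : ℂ → ℝ} {c w : ℂ} {R : ℝ}
    (hu : InnerProductSpace.HarmonicOnNhd u (closedBall c R)) (hle : ∀ z ∈ sphere c R, u z ≤ 0)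
    (hw : w ∈ ball c R) : (R + ‖w - c‖) / (R - ‖w - c‖) * u c ≤ u w := by
  have hR : |R| = R := abs_of_pos (pos_of_mem_ball hw)
  have hu' : InnerProductSpace.HarmonicOnNhd u (closedBall c |R|) := by rwa [hR]
  have hcont : ContinuousOn u (sphere c |R|) := fun z hz =>
    (hu' z (sphere_subset_closedBall hz)).1.continuousAt.continuousWithinAt
  rw [← hu.circleAverage_re_herglotzRieszKernel_smul hw, ← hu'.circleAverage_eq,
    ← smul_eq_mul, ← Real.circleAverage_fun_smul]
  refine Real.circleAverage_mono ?_ ?_ fun z hz => ?_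
  · exact ContinuousOn.circleIntegrable' (by fun_prop)
  · exact ((continuous_re.comp_continuousOn
      (continuousOn_herglotzRieszKernel_sphere hw)).smul hcont).circleIntegrable'
  · rw [hR] at hz
    exact mul_le_mul_of_nonpos_right (re_herglotzRieszKernel_le hz hw) (hle z hz)

lemma harnack_of_nonpos {u : ℂ → ℝ} {c w : ℂ} {R : ℝ}
    (hu : InnerProductSpace.HarmonicOnNhd u (ball c R)) (hle : ∀ z ∈ ball c R, u z ≤ 0)
    (hw : w ∈ ball c R) : (R + ‖w - c‖) / (R - ‖w - c‖) * u c ≤ u w := by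
  have hwR : ‖w - c‖ < R := mem_ball_iff_norm.1 hw
  have hlim : Tendsto (fun r : ℝ => (r + ‖w - c‖) / (r - ‖w - c‖) * u c) (𝓝[<] R)
      (𝓝 ((R + ‖w - c‖) / (R - ‖w - c‖) * u c)) := by
    have hsub : R - ‖w - c‖ ≠ 0 := (sub_pos.2 hwR).ne'
    have : ContinuousAt (fun r : ℝ => (r + ‖w - c‖) / (r - ‖w - c‖) * u c) R := by
      fun_prop (disch := assumption)
    exact this.tendsto.mono_left nhdsWithin_le_nhds
  refine le_of_tendsto hlim ?_
  filter_upwards [Ioo_mem_nhdsLT hwR] with r hr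
  have hball : closedBall c r ⊆ ball c R := closedBall_subset_ball hr.2
  exact harnack_of_nonpos_of_closedBall (fun z hz => hu z (hball hz))
    (fun z hz => hle z (hball (sphere_subset_closedBall hz))) (mem_ball_iff_norm.2 hr.1)

lemma exists_finset_eqOn_prod_sub_pow_mul {f : ℂ → ℂ} {U : Set ℂ} {z₀ : ℂ} (hU : IsCompact U)
    (hUc : IsConnected U) (hz₀ : z₀ ∈ interior U) (hf : AnalyticOnNhd ℂ f U) (hfz₀ : f z₀ ≠ 0) :
    ∃ (s : Finset ℂ) (m : ℂ → ℕ) (g : ℂ → ℂ), (∀ ζ ∈ s, ζ ∈ U ∧ f ζ = 0) ∧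
      AnalyticOnNhd ℂ g U ∧ (∀ z ∈ U, g z ≠ 0) ∧
      EqOn f (fun z => (∏ ζ ∈ s, (z - ζ) ^ m ζ) * g z) U := by
  have hz₀U : z₀ ∈ U := interior_subset hz₀
  have horder : ∀ u : U, meromorphicOrderAt f u ≠ ⊤ := by
    rw [← hf.meromorphicOn.exists_meromorphicOrderAt_ne_top_iff_forall hUc]
    refine ⟨⟨z₀, hz₀U⟩, ?_⟩
    simp [((hf z₀ hz₀U).meromorphicNFAt.meromorphicOrderAt_eq_zero_iff).2 hfz₀]
  set D := MeromorphicOn.divisor f U with hD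
  have hfin : D.support.Finite := D.finiteSupport hU
  have hDnonneg : 0 ≤ D := MeromorphicOn.AnalyticOnNhd.divisor_nonneg hf
  have hcast : ∀ ζ, ((D ζ).toNat : ℤ) = D ζ := fun ζ => Int.toNat_of_nonneg (hDnonneg ζ)
  obtain ⟨g, hg, hg0, hfg⟩ := hf.meromorphicOn.extract_zeros_poles horder hfin
  have hprod : (∏ᶠ u, (· - u) ^ D u : ℂ → ℂ) =
      fun z => ∏ ζ ∈ hfin.toFinset, (z - ζ) ^ (D ζ).toNat := by
    ext z
    rw [finprod_eq_prod_of_mulSupport_subset (s := hfin.toFinset), Finset.prod_apply]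
    · exact Finset.prod_congr rfl fun ζ _ => by rw [Pi.pow_apply, ← zpow_natCast, hcast]
    · rw [Function.FactorizedRational.mulSupport, hfin.coe_toFinset]
  have heq : EqOn f (fun z => (∏ ζ ∈ hfin.toFinset, (z - ζ) ^ (D ζ).toNat) * g z) U := by
    refine hf.eqOn_of_preconnected_of_frequently_eq ?_ hUc.isPreconnected hz₀U ?_
    · exact AnalyticOnNhd.mul (fun z _ => by fun_prop) hg
    · rw [← hD, hprod] at hfg
      refine Eventually.frequently ?_
      filter_upwards [mem_codiscreteWithin_iff_forall_mem_nhdsNE.1 hfg z₀ hz₀U,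
        nhdsWithin_le_nhds (mem_interior_iff_mem_nhds.1 hz₀)] with z hz hzU
      exact hz.resolve_right fun h => h hzU
  refine ⟨hfin.toFinset, fun ζ => (D ζ).toNat, g, fun ζ hζ => ?_, hg,
    fun z hz => hg0 ⟨z, hz⟩, heq⟩
  have hζD : D ζ ≠ 0 := hfin.mem_toFinset.1 hζ
  have hζU : ζ ∈ U := D.supportWithinDomain hζD
  have hζm : (D ζ).toNat ≠ 0 := by have := hcast ζ; omega
  refine ⟨hζU, (heq hζU).trans ?_⟩
  beta_reduce
  rw [Finset.prod_eq_zero hζ (by rw [sub_self, zero_pow hζm]), zero_mul]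

lemma norm_one_sub_conj_mul_sq (ζ z : ℂ) :
    ‖1 - conj ζ * z‖ ^ 2 = ‖z - ζ‖ ^ 2 + (1 - ‖z‖ ^ 2) * (1 - ‖ζ‖ ^ 2) := by
  simp only [← normSq_eq_norm_sq, normSq_apply, sub_re, sub_im, mul_re, mul_im, conj_re, conj_im,
    one_re, one_im]
  ring

lemma log_norm_canonicalFactor_one {ζ z : ℂ} (h : z ≠ ζ) :
    Real.log ‖canonicalFactor 1 ζ z‖ =
      Real.log (1 + (1 - ‖z‖ ^ 2) * (1 - ‖ζ‖ ^ 2) / ‖z - ζ‖ ^ 2) / 2 := by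
  have hpos : ‖z - ζ‖ ≠ 0 := norm_ne_zero_iff.2 (sub_ne_zero.2 h)
  have hsq : ‖canonicalFactor 1 ζ z‖ ^ 2 =
      1 + (1 - ‖z‖ ^ 2) * (1 - ‖ζ‖ ^ 2) / ‖z - ζ‖ ^ 2 := by
    rw [canonicalFactor_apply, ofReal_one, one_pow, one_mul, norm_div, div_pow,
      norm_one_sub_conj_mul_sq, add_div, div_self (pow_ne_zero 2 hpos)]
  rw [← hsq, Real.log_pow, Nat.cast_ofNat, mul_div_cancel_left₀ _ two_ne_zero]

lemma one_sub_norm_sq_nonneg {ζ : ℂ} (hζ : ‖ζ‖ ≤ 1) : 0 ≤ 1 - ‖ζ‖ ^ 2 :=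
  sub_nonneg.2 (pow_le_one₀ (norm_nonneg ζ) hζ)

lemma log_norm_canonicalFactor_one_nonneg {ζ z : ℂ} (hζ : ‖ζ‖ ≤ 1) (hz : ‖z‖ ≤ 1) :
    0 ≤ Real.log ‖canonicalFactor 1 ζ z‖ := by
  rcases eq_or_ne z ζ with rfl | h
  · simp
  · rw [log_norm_canonicalFactor_one h]
    exact div_nonneg (Real.log_nonneg (le_add_of_nonneg_right (div_nonneg
      (mul_nonneg (one_sub_norm_sq_nonneg hz) (one_sub_norm_sq_nonneg hζ)) (sq_nonneg _))))
      zero_le_two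

lemma norm_one_sub_conj_mul_eq_of_norm_eq_one (ζ : ℂ) {z : ℂ} (hz : ‖z‖ = 1) :
    ‖1 - conj ζ * z‖ = ‖z - ζ‖ := by
  rw [← sq_eq_sq₀ (norm_nonneg _) (norm_nonneg _), norm_one_sub_conj_mul_sq, hz]
  ring

lemma one_sub_conj_mul_ne_zero {ζ z : ℂ} (hζ : ‖ζ‖ ≤ 1) (hz : ‖z‖ < 1) : 1 - conj ζ * z ≠ 0 := by
  refine sub_ne_zero.2 fun h => ?_
  have : ‖conj ζ * z‖ < 1 := by
    rw [norm_mul, norm_conj]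
    exact (mul_le_of_le_one_left (norm_nonneg z) hζ).trans_lt hz
  rw [← h, norm_one] at this
  exact this.false

lemma exists_mul_prod_canonicalFactor_eq {f : ℂ → ℂ} (hf : AnalyticOnNhd ℂ f (closedBall 0 1))
    (hle : ∀ z ∈ sphere (0 : ℂ) 1, ‖f z‖ ≤ 1) (hf0 : f 0 ≠ 0) :
    ∃ (s : Finset ℂ) (m : ℂ → ℕ) (B : ℂ → ℂ), (∀ ζ ∈ s, ‖ζ‖ ≤ 1 ∧ f ζ = 0) ∧
      AnalyticOnNhd ℂ B (ball 0 1) ∧ (∀ z ∈ ball 0 1, B z ≠ 0 ∧ ‖B z‖ ≤ 1) ∧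
      ∀ z ∈ ball 0 1, f z ≠ 0 → f z * ∏ ζ ∈ s, canonicalFactor 1 ζ z ^ m ζ = B z := by
  have hsub : ball (0 : ℂ) 1 ⊆ closedBall 0 1 := ball_subset_closedBall
  obtain ⟨s, m, g, hs, hg, hg0, hfg⟩ := exists_finset_eqOn_prod_sub_pow_mul
    (isCompact_closedBall 0 1) (isConnected_closedBall zero_le_one)
    (mem_interior_iff_mem_nhds.2 (closedBall_mem_nhds 0 one_pos)) hf hf0
  have hs1 : ∀ ζ ∈ s, ‖ζ‖ ≤ 1 := fun ζ hζ => mem_closedBall_zero_iff.1 (hs ζ hζ).1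
  set B : ℂ → ℂ := fun z => (∏ ζ ∈ s, (1 - conj ζ * z) ^ m ζ) * g z
  have hB : AnalyticOnNhd ℂ B (closedBall 0 1) := AnalyticOnNhd.mul (fun z _ => by fun_prop) hg
  have hBsphere : ∀ z ∈ sphere (0 : ℂ) 1, ‖B z‖ ≤ 1 := by
    intro z hz
    have hz1 : ‖z‖ = 1 := mem_sphere_zero_iff_norm.1 hz
    have : ‖B z‖ = ‖f z‖ := by
      simp only [B, hfg (sphere_subset_closedBall hz), norm_mul, norm_prod, norm_pow,
        norm_one_sub_conj_mul_eq_of_norm_eq_one _ hz1]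
    exact this.trans_le (hle z hz)
  refine ⟨s, m, B, fun ζ hζ => ⟨hs1 ζ hζ, (hs ζ hζ).2⟩, hB.mono hsub, fun z hz => ⟨?_, ?_⟩, ?_⟩
  · exact mul_ne_zero (Finset.prod_ne_zero_iff.2 fun ζ hζ => pow_ne_zero _
      (one_sub_conj_mul_ne_zero (hs1 ζ hζ) (mem_ball_zero_iff.1 hz))) (hg0 z (hsub hz))
  · have hBd : DiffContOnCl ℂ B (ball 0 1) :=
      DifferentiableOn.diffContOnCl (by
        rw [closure_ball _ one_ne_zero]; exact hB.differentiableOn)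
    refine norm_le_of_forall_mem_frontier_norm_le isBounded_ball hBd ?_ (subset_closure hz)
    rwa [frontier_ball _ one_ne_zero]
  · intro z hz hfz
    have hne : ∀ ζ ∈ s, z - ζ ≠ 0 := fun ζ hζ => sub_ne_zero.2 fun h => hfz (h ▸ (hs ζ hζ).2)
    have hP : (∏ ζ ∈ s, (z - ζ) ^ m ζ) ≠ 0 :=
      Finset.prod_ne_zero_iff.2 fun ζ hζ => pow_ne_zero _ (hne ζ hζ)
    simp only [B, hfg (hsub hz), canonicalFactor_apply, ofReal_one, one_pow, one_mul, div_pow,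
      Finset.prod_div_distrib]
    field_simp

lemma exists_le_log_norm_of_norm_le_one {f : ℂ → ℂ} (hf : AnalyticOnNhd ℂ f (closedBall 0 1))
    (hle : ∀ z ∈ sphere (0 : ℂ) 1, ‖f z‖ ≤ 1) (hf0 : f 0 ≠ 0) :
    ∃ (s : Finset ℂ) (m : ℂ → ℕ), (∀ ζ ∈ s, ζ ≠ 0 ∧ ‖ζ‖ ≤ 1) ∧
      Real.log ‖f 0‖ ≤ ∑ ζ ∈ s, m ζ * Real.log ‖ζ‖ ∧
      ∀ z ∈ ball 0 1, (1 + ‖z‖) / (1 - ‖z‖) *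
          (Real.log ‖f 0‖ - ∑ ζ ∈ s, m ζ * Real.log ‖ζ‖) -
        ∑ ζ ∈ s, m ζ * Real.log ‖canonicalFactor 1 ζ z‖ ≤ Real.log ‖f z‖ := by
  obtain ⟨s, m, B, hs, hB, hB1, hfB⟩ := exists_mul_prod_canonicalFactor_eq hf hle hf0
  have h0 : (0 : ℂ) ∈ ball (0 : ℂ) 1 := mem_ball_self one_pos
  have hlog : ∀ z ∈ ball 0 1, f z ≠ 0 →
      Real.log ‖f z‖ = Real.log ‖B z‖ - ∑ ζ ∈ s, m ζ * Real.log ‖canonicalFactor 1 ζ z‖ := by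
    intro z hz hfz
    have hprod := right_ne_zero_of_mul (hfB z hz hfz ▸ (hB1 z hz).1)
    rw [← hfB z hz hfz, norm_mul, norm_prod, Real.log_mul (norm_ne_zero_iff.2 hfz)
      (by rwa [← norm_prod, norm_ne_zero_iff]), Real.log_prod
      fun ζ hζ => norm_ne_zero_iff.2 (Finset.prod_ne_zero_iff.1 hprod ζ hζ)]
    simp only [norm_pow, Real.log_pow, add_sub_cancel_right]
  have hB0 : Real.log ‖B 0‖ = Real.log ‖f 0‖ - ∑ ζ ∈ s, m ζ * Real.log ‖ζ‖ := by
    rw [hlog 0 h0 hf0]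
    simp [canonicalFactor_apply]
  have hBnonpos : ∀ z ∈ ball 0 1, Real.log ‖B z‖ ≤ 0 := fun z hz =>
    Real.log_nonpos (norm_nonneg _) (hB1 z hz).2
  refine ⟨s, m, fun ζ hζ => ⟨fun h => hf0 (h ▸ (hs ζ hζ).2), (hs ζ hζ).1⟩,
    sub_nonpos.1 (hB0 ▸ hBnonpos 0 h0), fun z hz => ?_⟩
  have hz1 : ‖z‖ < 1 := mem_ball_zero_iff.1 hz
  rw [← hB0]
  rcases eq_or_ne (f z) 0 with hfz | hfz
  · have hsum : 0 ≤ ∑ ζ ∈ s, m ζ * Real.log ‖canonicalFactor 1 ζ z‖ :=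
      Finset.sum_nonneg fun ζ hζ => mul_nonneg (Nat.cast_nonneg _)
        (log_norm_canonicalFactor_one_nonneg (hs ζ hζ).1 hz1.le)
    have hharnack : (1 + ‖z‖) / (1 - ‖z‖) * Real.log ‖B 0‖ ≤ 0 :=
      mul_nonpos_of_nonneg_of_nonpos
        (div_nonneg (by positivity) (sub_nonneg.2 hz1.le)) (hBnonpos 0 h0)
    rw [hfz, norm_zero, Real.log_zero]
    linarith
  · rw [hlog z hz hfz]
    gcongr
    simpa using harnack_of_nonpos (fun z hz => (hB z hz).harmonicAt_log_norm (hB1 z hz).1)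
      hBnonpos hz

/-! ### Inverse square roots -/

lemma one_add_sq_le_exp {s : ℝ} (hs : 0 ≤ s) : 1 + s ^ 2 ≤ Real.exp s := by
  refine le_trans ?_ (Real.sum_le_exp_of_nonneg hs 4)
  norm_num [Finset.sum_range_succ, Nat.factorial]
  nlinarith [mul_nonneg hs (sq_nonneg (s - 3 / 2))]

-- The fourth root leaves only an integrable singularity when `y` has a double pole.
lemma log_one_add_le_two_mul_sqrt_sqrt {y : ℝ} (hy : 0 ≤ y) : Real.log (1 + y) ≤ 2 * √√y := by
  calc Real.log (1 + y) ≤ Real.log ((1 + √√y ^ 2) ^ 2) := by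
        refine Real.log_le_log (by positivity) ?_
        rw [Real.sq_sqrt (Real.sqrt_nonneg y)]
        nlinarith [Real.sq_sqrt hy, Real.sqrt_nonneg y]
    _ ≤ Real.log (Real.exp √√y ^ 2) := by
        gcongr
        exact one_add_sq_le_exp (Real.sqrt_nonneg _)
    _ = 2 * √√y := by rw [Real.log_pow, Real.log_exp, Nat.cast_ofNat]

lemma inv_sqrt_eq_rpow (x : ℝ) : (√x)⁻¹ = x ^ (-(1 / 2) : ℝ) := by
  rcases le_or_gt 0 x with hx | hx
  · rw [Real.rpow_neg hx, Real.sqrt_eq_rpow]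
  · rw [Real.sqrt_eq_zero_of_nonpos hx.le, inv_zero, Real.rpow_def_of_neg hx, neg_mul, Real.cos_neg,
      one_div_mul_eq_div, Real.cos_pi_div_two, mul_zero]

lemma intervalIntegrable_inv_sqrt (p q : ℝ) :
    IntervalIntegrable (fun x => (√x)⁻¹) volume p q := by
  simpa only [inv_sqrt_eq_rpow] using intervalIntegral.intervalIntegrable_rpow' (by norm_num)

lemma intervalIntegrable_inv_sqrt_neg (p q : ℝ) :
    IntervalIntegrable (fun x => (√(-x))⁻¹) volume p q :=
  (IntervalIntegrable.iff_comp_neg (f := fun x => (√(-x))⁻¹)).2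
    (by simpa only [neg_neg] using intervalIntegrable_inv_sqrt _ _)

lemma integral_inv_sqrt (p q : ℝ) : ∫ x in p..q, (√x)⁻¹ = 2 * (√q - √p) := by
  simp only [inv_sqrt_eq_rpow]
  rw [integral_rpow (Or.inl (by norm_num))]
  norm_num [Real.sqrt_eq_rpow]
  ring

lemma inv_sqrt_abs (x : ℝ) : (√|x|)⁻¹ = (√x)⁻¹ + (√(-x))⁻¹ := by
  rcases le_total 0 x with hx | hx
  · rw [abs_of_nonneg hx, Real.sqrt_eq_zero_of_nonpos (neg_nonpos.2 hx), inv_zero, add_zero]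
  · rw [abs_of_nonpos hx, Real.sqrt_eq_zero_of_nonpos hx, inv_zero, zero_add]

lemma intervalIntegrable_inv_sqrt_abs_sub (c p q : ℝ) :
    IntervalIntegrable (fun x => (√|x - c|)⁻¹) volume p q := by
  simp only [inv_sqrt_abs]
  simpa only [sub_add_cancel] using ((intervalIntegrable_inv_sqrt (p - c) (q - c)).add
    (intervalIntegrable_inv_sqrt_neg (p - c) (q - c))).comp_sub_right c

lemma sqrt_sub_sqrt_neg_sub_le {p q : ℝ} (hpq : p ≤ q) :
    (√q - √(-q)) - (√p - √(-p)) ≤ √(2 * (q - p)) := by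
  refine Real.le_sqrt_of_sq_le ?_
  rcases le_total 0 p with hp | hp <;> rcases le_total 0 q with hq | hq
  · rw [Real.sqrt_eq_zero_of_nonpos (neg_nonpos.2 hq),
      Real.sqrt_eq_zero_of_nonpos (neg_nonpos.2 hp)]
    nlinarith [Real.sq_sqrt hq, Real.sq_sqrt hp, Real.sqrt_le_sqrt hpq, Real.sqrt_nonneg p]
  · obtain rfl : p = 0 := by linarith
    obtain rfl : q = 0 := by linarith
    simp
  · rw [Real.sqrt_eq_zero_of_nonpos (neg_nonpos.2 hq), Real.sqrt_eq_zero_of_nonpos hp]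
    nlinarith [Real.sq_sqrt hq, Real.sq_sqrt (neg_nonneg.2 hp), sq_nonneg (√q - √(-p))]
  · rw [Real.sqrt_eq_zero_of_nonpos hq, Real.sqrt_eq_zero_of_nonpos hp]
    nlinarith [Real.sq_sqrt (neg_nonneg.2 hq), Real.sq_sqrt (neg_nonneg.2 hp),
      Real.sqrt_le_sqrt (neg_le_neg hpq), Real.sqrt_nonneg (-q)]

lemma integral_inv_sqrt_abs_sub_le (c : ℝ) {p q : ℝ} (hpq : p ≤ q) :
    ∫ x in p..q, (√|x - c|)⁻¹ ≤ 2 * √(2 * (q - p)) := by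
  calc ∫ x in p..q, (√|x - c|)⁻¹
      = ∫ x in (p - c)..(q - c), ((√x)⁻¹ + (√(-x))⁻¹) := by
        simp only [← inv_sqrt_abs]
        exact intervalIntegral.integral_comp_sub_right (fun x => (√|x|)⁻¹) c
    _ = 2 * ((√(q - c) - √(-(q - c))) - (√(p - c) - √(-(p - c)))) := by
        rw [intervalIntegral.integral_add (intervalIntegrable_inv_sqrt _ _)
          (intervalIntegrable_inv_sqrt_neg _ _),
          intervalIntegral.integral_comp_neg (fun x => (√x)⁻¹), integral_inv_sqrt,
          integral_inv_sqrt]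
        ring
    _ ≤ 2 * √(2 * (q - p)) := by
        have := sqrt_sub_sqrt_neg_sub_le (sub_le_sub_right hpq c)
        rw [sub_sub_sub_cancel_right] at this
        gcongr

/-! ### The disc parametrization -/

/-- The Möbius parametrization `u ↦ u / (2 - u)` of the disc `‖x - 1/3‖ ≤ 2/3` by the closed
unit disc, fixing `0` and `1`. On this disc `1 - ‖x‖` is at least of order `‖1 - x‖ ^ 2`. -/
noncomputable def discPoint (u : ℂ) : ℂ := u / (2 - u)

/-- The real restriction of the inverse of `discPoint`. -/
noncomputable def discCoord (x : ℝ) : ℝ := 2 * x / (1 + x)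

lemma discCoord_mem_Icc {x : ℝ} (hx : x ∈ Icc (0 : ℝ) 1) : discCoord x ∈ Icc (0 : ℝ) 1 := by
  have h1 : 0 < 1 + x := by linarith [hx.1]
  exact ⟨div_nonneg (by linarith [hx.1]) h1.le, (div_le_one h1).2 (by linarith [hx.2])⟩

lemma norm_discCoord {x : ℝ} (hx : x ∈ Icc (0 : ℝ) 1) : ‖(discCoord x : ℂ)‖ = discCoord x := by
  rw [norm_real, Real.norm_of_nonneg (discCoord_mem_Icc hx).1]

lemma one_sub_discCoord {x : ℝ} (hx : 1 + x ≠ 0) : 1 - discCoord x = (1 - x) / (1 + x) := by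
  rw [discCoord]
  field_simp
  ring

lemma one_add_discCoord {x : ℝ} (hx : 1 + x ≠ 0) :
    1 + discCoord x = (1 + 3 * x) / (1 + x) := by
  rw [discCoord]
  field_simp
  ring

lemma discCoord_lt_one {x : ℝ} (hx : x ∈ Ico (0 : ℝ) 1) : discCoord x < 1 := by
  have hx1 : 0 < 1 + x := by linarith [hx.1]
  rw [← sub_pos, one_sub_discCoord hx1.ne']
  exact div_pos (sub_pos.2 hx.2) hx1

lemma discPoint_discCoord {x : ℝ} (hx : 1 + x ≠ 0) : discPoint (discCoord x) = x := by
  have h : (1 + x : ℂ) ≠ 0 := mod_cast hx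
  have h2 : (2 - discCoord x : ℂ) = 2 / (1 + x) := by
    rw [discCoord]
    push_cast
    field_simp
    ring
  rw [discPoint, h2, discCoord]
  push_cast
  field_simp

lemma one_le_norm_two_sub {ζ : ℂ} (hζ : ‖ζ‖ ≤ 1) : 1 ≤ ‖2 - ζ‖ := by
  have := norm_sub_norm_le 2 ζ
  rw [Complex.norm_ofNat] at this
  linarith

lemma two_sub_ne_zero {ζ : ℂ} (hζ : ‖ζ‖ ≤ 1) : 2 - ζ ≠ 0 :=
  norm_pos_iff.1 (one_pos.trans_le (one_le_norm_two_sub hζ))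

lemma abs_sub_re_discPoint_le {ζ : ℂ} (hζ : ‖ζ‖ ≤ 1) {x : ℝ} (hx : 0 < 1 + x) :
    |x - (discPoint ζ).re| ≤ (1 + x) * ‖discCoord x - ζ‖ := by
  have h1 : (1 + x : ℂ) ≠ 0 := mod_cast hx.ne'
  have h2 : 2 - ζ ≠ 0 := two_sub_ne_zero hζ
  have heq : (x : ℂ) - discPoint ζ = ((1 + x : ℝ) : ℂ) * (discCoord x - ζ) / (2 - ζ) := by
    rw [discCoord, discPoint]
    push_cast
    field_simp
    ring
  calc |x - (discPoint ζ).re| = |((x : ℂ) - discPoint ζ).re| := by rw [sub_re, ofReal_re]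
    _ ≤ ‖(x : ℂ) - discPoint ζ‖ := abs_re_le_norm _
    _ = (1 + x) * ‖discCoord x - ζ‖ / ‖2 - ζ‖ := by
        rw [heq, norm_div, norm_mul, norm_real, Real.norm_of_nonneg hx.le]
    _ ≤ (1 + x) * ‖discCoord x - ζ‖ :=
        div_le_self (by positivity) (one_le_norm_two_sub hζ)

lemma analyticAt_discCoord {x : ℝ} (hx : 1 + x ≠ 0) : AnalyticAt ℝ discCoord x := by
  unfold discCoord
  exact AnalyticAt.fun_div (by fun_prop) (by fun_prop) hx

lemma intervalIntegrable_log_norm_comp {g : ℂ → ℂ} {γ : ℝ → ℂ} {p q : ℝ}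
    (hγ : ∀ x ∈ uIcc p q, AnalyticAt ℝ γ x) (hg : ∀ x ∈ uIcc p q, MeromorphicAt g (γ x)) :
    IntervalIntegrable (fun x => Real.log ‖g (γ x)‖) volume p q :=
  MeromorphicOn.intervalIntegrable_log_norm (f := g ∘ γ)
    fun x hx => (hg x hx).comp_analyticAt (hγ x hx)

lemma intervalIntegrable_log_norm_discCoord {f : ℂ → ℂ} (hf : MeromorphicOn f (closedBall 0 1))
    {p q : ℝ} (hp : p ∈ Icc (0 : ℝ) 1) (hq : q ∈ Icc (0 : ℝ) 1) :
    IntervalIntegrable (fun x => Real.log ‖f (discCoord x)‖) volume p q := by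
  have hpq : uIcc p q ⊆ Icc 0 1 := uIcc_subset_Icc hp hq
  refine intervalIntegrable_log_norm_comp (γ := fun x => (discCoord x : ℂ))
    (fun x hx => ?_) fun x hx => hf _ ?_
  · exact (ofRealCLM.analyticAt _).comp (analyticAt_discCoord (by linarith [(hpq hx).1]))
  · rw [mem_closedBall_zero_iff, norm_discCoord (hpq hx)]
    exact (discCoord_mem_Icc (hpq hx)).2

/-! ### Integrals of Green functions near `1` -/

lemma log_norm_canonicalFactor_discCoord_le {ζ : ℂ} (hζ : ‖ζ‖ ≤ 1) {x : ℝ} (hx : x ∈ Icc (0 : ℝ) 1)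
    (hne : x ≠ (discPoint ζ).re) :
    Real.log ‖canonicalFactor 1 ζ (discCoord x)‖ ≤
      √√((1 - x) * (1 + 3 * x) * (1 - ‖ζ‖ ^ 2)) * (√|x - (discPoint ζ).re|)⁻¹ := by
  set v := 1 - ‖ζ‖ ^ 2
  have hv : 0 ≤ v := one_sub_norm_sq_nonneg hζ
  set t := |x - (discPoint ζ).re|
  have ht : 0 < t := abs_pos.2 (sub_ne_zero.2 hne)
  have hx1 : 0 < 1 + x := by linarith [hx.1]
  have htle : t ≤ (1 + x) * ‖discCoord x - ζ‖ := abs_sub_re_discPoint_le hζ hx1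
  have hA : 0 ≤ (1 - x) * (1 + 3 * x) * v :=
    mul_nonneg (mul_nonneg (by linarith [hx.2]) (by linarith [hx.1])) hv
  have hu : (discCoord x : ℂ) ≠ ζ := fun h => by
    rw [h, sub_self, norm_zero, mul_zero] at htle
    exact ht.not_ge htle
  have hsq : 1 - discCoord x ^ 2 = (1 - x) * (1 + 3 * x) / (1 + x) ^ 2 := by
    rw [sq (1 + x), mul_div_mul_comm, ← one_sub_discCoord hx1.ne', ← one_add_discCoord hx1.ne']
    ring
  set y := (1 - discCoord x ^ 2) * v / ‖discCoord x - ζ‖ ^ 2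
  have hy : y = (1 - x) * (1 + 3 * x) * v / ((1 + x) * ‖discCoord x - ζ‖) ^ 2 := by
    simp only [y, hsq]
    field_simp
  calc Real.log ‖canonicalFactor 1 ζ (discCoord x)‖ = Real.log (1 + y) / 2 := by
        rw [log_norm_canonicalFactor_one hu, norm_discCoord hx]
    _ ≤ √√y := by
        have : 0 ≤ y := hy ▸ by positivity
        linarith [log_one_add_le_two_mul_sqrt_sqrt this]
    _ ≤ √√((1 - x) * (1 + 3 * x) * v / t ^ 2) := by
        rw [hy]
        gcongr
    _ = √√((1 - x) * (1 + 3 * x) * v) * (√t)⁻¹ := by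
        rw [Real.sqrt_div' _ (sq_nonneg t), Real.sqrt_sq ht.le, Real.sqrt_div' _ ht.le,
          div_eq_mul_inv]

section IntervalNearOne

variable {a : ℝ} (ha : a ∈ Ioc (0 : ℝ) (1 / 2))

include ha

lemma Icc_one_sub_two_mul_subset : Icc (1 - 2 * a) (1 - a) ⊆ Icc (0 : ℝ) 1 :=
  Icc_subset_Icc (by linarith [ha.2]) (by linarith [ha.1])

lemma intervalIntegrable_log_norm_canonicalFactor (ζ : ℂ) :
    IntervalIntegrable (fun x => Real.log ‖canonicalFactor 1 ζ (discCoord x)‖) volume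
      (1 - 2 * a) (1 - a) :=
  intervalIntegrable_log_norm_discCoord (fun _ _ => meromorphic_canonicalFactor 1 ζ _)
    (Icc_one_sub_two_mul_subset ha (left_mem_Icc.2 (by linarith [ha.1])))
    (Icc_one_sub_two_mul_subset ha (right_mem_Icc.2 (by linarith [ha.1])))

lemma integral_log_norm_canonicalFactor_le_sqrt {ζ : ℂ} (hζ : ‖ζ‖ ≤ 1) :
    ∫ x in (1 - 2 * a)..(1 - a), Real.log ‖canonicalFactor 1 ζ (discCoord x)‖ ≤
      √√(8 * a * (1 - ‖ζ‖ ^ 2)) * (2 * √(2 * a)) := by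
  have hle : 1 - 2 * a ≤ 1 - a := by linarith [ha.1]
  have hv := one_sub_norm_sq_nonneg hζ
  calc ∫ x in (1 - 2 * a)..(1 - a), Real.log ‖canonicalFactor 1 ζ (discCoord x)‖
      ≤ ∫ x in (1 - 2 * a)..(1 - a), √√(8 * a * (1 - ‖ζ‖ ^ 2)) *
          (√|x - (discPoint ζ).re|)⁻¹ := by
        refine intervalIntegral.integral_mono_ae_restrict hle
          (intervalIntegrable_log_norm_canonicalFactor ha ζ)
          ((intervalIntegrable_inv_sqrt_abs_sub _ _ _).const_mul _) ?_
        filter_upwards [ae_restrict_mem measurableSet_Icc,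
          ae_restrict_of_ae (Measure.ae_ne volume (discPoint ζ).re)] with x hx hne
        have hx01 := Icc_one_sub_two_mul_subset ha hx
        refine (log_norm_canonicalFactor_discCoord_le hζ hx01 hne).trans ?_
        gcongr ?_ * _
        have : (1 - x) * (1 + 3 * x) ≤ 8 * a := by nlinarith [hx.1, hx01.1, hx01.2]
        gcongr
    _ ≤ √√(8 * a * (1 - ‖ζ‖ ^ 2)) * (2 * √(2 * a)) := by
        rw [intervalIntegral.integral_const_mul]
        gcongr
        refine (integral_inv_sqrt_abs_sub_le (discPoint ζ).re hle).trans_eq ?_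
        rw [show 1 - a - (1 - 2 * a) = a by ring]

lemma integral_log_norm_canonicalFactor_le_of_norm_le {ζ : ℂ} (hζ : ‖ζ‖ ≤ 1 - a / 4) :
    ∫ x in (1 - 2 * a)..(1 - a), Real.log ‖canonicalFactor 1 ζ (discCoord x)‖ ≤
      9 * (1 - ‖ζ‖ ^ 2) := by
  set v := 1 - ‖ζ‖ ^ 2 with hv
  have ha0 : 0 < a := ha.1
  have hva : 15 / 32 * a ≤ v := by
    have : ‖ζ‖ ^ 2 ≤ (1 - a / 4) ^ 2 := by gcongr
    nlinarith [ha.2, hv]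
  have hv0 : 0 ≤ v := by linarith
  refine (integral_log_norm_canonicalFactor_le_sqrt ha (by linarith)).trans ?_
  refine le_of_pow_le_pow_left₀ four_ne_zero (by positivity) ?_
  calc (√√(8 * a * v) * (2 * √(2 * a))) ^ 4
      = (√√(8 * a * v) ^ 2) ^ 2 * (16 * (√(2 * a) ^ 2) ^ 2) := by ring
    _ = 512 * a ^ 3 * v := by
        rw [Real.sq_sqrt (by positivity), Real.sq_sqrt (by positivity),
          Real.sq_sqrt (by positivity)]
        ring
    _ ≤ 6561 * v ^ 3 * v := by
        have : (15 / 32 * a) ^ 3 ≤ v ^ 3 := by gcongr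
        gcongr ?_ * v
        linarith [pow_pos ha0 3]
    _ = (9 * v) ^ 4 := by ring

lemma log_norm_canonicalFactor_discCoord_le_of_le_norm {ζ : ℂ} (hζ : ‖ζ‖ ≤ 1)
    (hζa : 1 - a / 4 ≤ ‖ζ‖) {x : ℝ} (hx : x ∈ Icc (1 - 2 * a) (1 - a)) :
    Real.log ‖canonicalFactor 1 ζ (discCoord x)‖ ≤ 9 * (1 - ‖ζ‖ ^ 2) / a := by
  have ha0 : 0 < a := ha.1
  have hx01 := Icc_one_sub_two_mul_subset ha hx
  have hv := one_sub_norm_sq_nonneg hζ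
  have hu := discCoord_mem_Icc hx01
  set v := 1 - ‖ζ‖ ^ 2
  set d := 1 - discCoord x with hd
  have hda : a / 2 ≤ d := by
    have hx1 : 0 < 1 + x := by linarith [hx01.1]
    rw [hd, one_sub_discCoord hx1.ne', div_le_div_iff₀ two_pos hx1]
    nlinarith [hx.2, hx01.2]
  have hdist : d / 2 ≤ ‖discCoord x - ζ‖ := by
    have := norm_sub_norm_le ζ (discCoord x)
    rw [norm_discCoord hx01, norm_sub_rev] at this
    linarith
  have hne : (discCoord x : ℂ) ≠ ζ := fun h => by
    rw [h, sub_self, norm_zero] at hdist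
    linarith
  have hu2 : 1 - discCoord x ^ 2 ≤ 2 * d := by nlinarith [hu.1, hu.2]
  calc Real.log ‖canonicalFactor 1 ζ (discCoord x)‖
      = Real.log (1 + (1 - discCoord x ^ 2) * v / ‖discCoord x - ζ‖ ^ 2) / 2 := by
        rw [log_norm_canonicalFactor_one hne, norm_discCoord hx01]
    _ ≤ (1 - discCoord x ^ 2) * v / ‖discCoord x - ζ‖ ^ 2 / 2 := by
        have hy : 0 ≤ (1 - discCoord x ^ 2) * v / ‖discCoord x - ζ‖ ^ 2 :=
          div_nonneg (mul_nonneg (sub_nonneg.2 (pow_le_one₀ hu.1 hu.2)) hv) (sq_nonneg _)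
        gcongr
        linarith [Real.log_le_sub_one_of_pos (add_pos_of_pos_of_nonneg one_pos hy)]
    _ ≤ 2 * d * v / (d / 2) ^ 2 / 2 := by
        have : 0 < d := by linarith
        gcongr
    _ = 4 * v / d := by
        have : d ≠ 0 := by linarith
        field_simp
        ring
    _ ≤ 4 * v / (a / 2) := by gcongr
    _ ≤ 9 * v / a := by
        rw [div_div_eq_mul_div]
        gcongr ?_ / a
        linarith

lemma integral_log_norm_canonicalFactor_le_of_le_norm {ζ : ℂ} (hζ : ‖ζ‖ ≤ 1)
    (hζa : 1 - a / 4 ≤ ‖ζ‖) :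
    ∫ x in (1 - 2 * a)..(1 - a), Real.log ‖canonicalFactor 1 ζ (discCoord x)‖ ≤
      9 * (1 - ‖ζ‖ ^ 2) := by
  calc ∫ x in (1 - 2 * a)..(1 - a), Real.log ‖canonicalFactor 1 ζ (discCoord x)‖
      ≤ ∫ _ in (1 - 2 * a)..(1 - a), 9 * (1 - ‖ζ‖ ^ 2) / a :=
        intervalIntegral.integral_mono_on (by linarith [ha.1])
          (intervalIntegrable_log_norm_canonicalFactor ha ζ) intervalIntegrable_const
          fun x hx => log_norm_canonicalFactor_discCoord_le_of_le_norm ha hζ hζa hx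
    _ = 9 * (1 - ‖ζ‖ ^ 2) := by
        have : a ≠ 0 := ha.1.ne'
        rw [intervalIntegral.integral_const, smul_eq_mul]
        field_simp
        ring

lemma integral_log_norm_canonicalFactor_le {ζ : ℂ} (hζ : ‖ζ‖ ≤ 1) (hζ0 : ζ ≠ 0) :
    ∫ x in (1 - 2 * a)..(1 - a), Real.log ‖canonicalFactor 1 ζ (discCoord x)‖ ≤
      -18 * Real.log ‖ζ‖ := by
  have hlog : 9 * (1 - ‖ζ‖ ^ 2) ≤ -18 * Real.log ‖ζ‖ := by
    have := Real.log_le_sub_one_of_pos (pow_pos (norm_pos_iff.2 hζ0) 2)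
    rw [Real.log_pow, Nat.cast_ofNat] at this
    linarith
  refine le_trans ?_ hlog
  -- Zeros close to the circle stay away from the interval; there the singularity plays no role.
  rcases le_total ‖ζ‖ (1 - a / 4) with h | h
  · exact integral_log_norm_canonicalFactor_le_of_norm_le ha h
  · exact integral_log_norm_canonicalFactor_le_of_le_norm ha hζ h

lemma one_add_discCoord_div_le {x : ℝ} (hx : x ∈ Icc (1 - 2 * a) (1 - a)) :
    (1 + discCoord x) / (1 - discCoord x) ≤ 4 / a := by
  have ha0 : 0 < a := ha.1
  have hx01 := Icc_one_sub_two_mul_subset ha hx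
  have hx1 : 1 + x ≠ 0 := by linarith [hx01.1]
  rw [one_add_discCoord hx1, one_sub_discCoord hx1, div_div_div_cancel_right₀ hx1]
  have h1 : a ≤ 1 - x := by linarith [hx.2]
  have h2 : 1 + 3 * x ≤ 4 := by linarith [hx01.2]
  gcongr

lemma intervalIntegrable_sum_log_norm_canonicalFactor (s : Finset ℂ) (m : ℂ → ℕ) :
    IntervalIntegrable (fun x => ∑ ζ ∈ s, m ζ * Real.log ‖canonicalFactor 1 ζ (discCoord x)‖)
      volume (1 - 2 * a) (1 - a) := by
  simpa only [Finset.sum_fn] using IntervalIntegrable.sum s fun ζ _ =>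
    (intervalIntegrable_log_norm_canonicalFactor ha ζ).const_mul (m ζ : ℝ)

lemma integral_sum_log_norm_canonicalFactor_le {s : Finset ℂ} (m : ℂ → ℕ)
    (hs : ∀ ζ ∈ s, ζ ≠ 0 ∧ ‖ζ‖ ≤ 1) :
    ∫ x in (1 - 2 * a)..(1 - a), ∑ ζ ∈ s, m ζ * Real.log ‖canonicalFactor 1 ζ (discCoord x)‖ ≤
      -18 * ∑ ζ ∈ s, m ζ * Real.log ‖ζ‖ := by
  rw [intervalIntegral.integral_finsetSum fun ζ _ =>
    (intervalIntegrable_log_norm_canonicalFactor ha ζ).const_mul (m ζ : ℝ), Finset.mul_sum]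
  refine Finset.sum_le_sum fun ζ hζ => ?_
  rw [intervalIntegral.integral_const_mul, mul_left_comm]
  gcongr
  exact integral_log_norm_canonicalFactor_le ha (hs ζ hζ).2 (hs ζ hζ).1

lemma eighteen_mul_log_norm_le_integral_log_norm_discCoord {f : ℂ → ℂ}
    (hf : AnalyticOnNhd ℂ f (closedBall 0 1)) (hle : ∀ z ∈ sphere (0 : ℂ) 1, ‖f z‖ ≤ 1)
    (hf0 : f 0 ≠ 0) :
    18 * Real.log ‖f 0‖ ≤ ∫ x in (1 - 2 * a)..(1 - a), Real.log ‖f (discCoord x)‖ := by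
  obtain ⟨s, m, hs, hS, hlower⟩ := exists_le_log_norm_of_norm_le_one hf hle hf0
  set S := ∑ ζ ∈ s, m ζ * Real.log ‖ζ‖
  have ha0 : 0 < a := ha.1
  have hab : 1 - 2 * a ≤ 1 - a := by linarith
  have hsum := intervalIntegrable_sum_log_norm_canonicalFactor ha s m
  calc 18 * Real.log ‖f 0‖ ≤ a * (4 / a * (Real.log ‖f 0‖ - S)) -
        ∫ x in (1 - 2 * a)..(1 - a),
          ∑ ζ ∈ s, m ζ * Real.log ‖canonicalFactor 1 ζ (discCoord x)‖ := by
        have hgreen := integral_sum_log_norm_canonicalFactor_le ha m hs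
        rw [← mul_assoc, mul_div_cancel₀ _ ha0.ne']
        linarith
    _ = ∫ x in (1 - 2 * a)..(1 - a), (4 / a * (Real.log ‖f 0‖ - S) -
          ∑ ζ ∈ s, m ζ * Real.log ‖canonicalFactor 1 ζ (discCoord x)‖) := by
        rw [intervalIntegral.integral_sub intervalIntegrable_const hsum,
          intervalIntegral.integral_const, smul_eq_mul]
        ring
    _ ≤ ∫ x in (1 - 2 * a)..(1 - a), Real.log ‖f (discCoord x)‖ := by
        refine intervalIntegral.integral_mono_on hab (intervalIntegrable_const.sub hsum)
          (intervalIntegrable_log_norm_discCoord hf.meromorphicOn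
            (Icc_one_sub_two_mul_subset ha (left_mem_Icc.2 hab))
            (Icc_one_sub_two_mul_subset ha (right_mem_Icc.2 hab))) fun x hx => ?_
        have hx01 := Icc_one_sub_two_mul_subset ha hx
        have hball : (discCoord x : ℂ) ∈ ball 0 1 := by
          rw [mem_ball_zero_iff, norm_discCoord hx01]
          exact discCoord_lt_one ⟨hx01.1, by linarith [hx.2]⟩
        have hharnack := mul_le_mul_of_nonpos_right (one_add_discCoord_div_le ha hx)
          (sub_nonpos.2 hS)
        have := hlower _ hball
        rw [norm_discCoord hx01] at this
        linarith

end IntervalNearOne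

/-! ### Functions of growth `M / (1 - ‖z‖)` -/

lemma one_sub_norm_mul_norm_sum_le {M : ℝ} {N : ℕ} {c : ℕ → ℂ} {z : ℂ} (hM : 0 ≤ M)
    (hc : ∀ i < N, ‖c i‖ ≤ M) (hz : ‖z‖ ≤ 1) :
    (1 - ‖z‖) * ‖∑ i ∈ Finset.range N, c i * z ^ i‖ ≤ M := by
  have : 0 ≤ 1 - ‖z‖ := sub_nonneg.2 hz
  calc (1 - ‖z‖) * ‖∑ i ∈ Finset.range N, c i * z ^ i‖
      ≤ (1 - ‖z‖) * ∑ i ∈ Finset.range N, M * ‖z‖ ^ i := by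
        gcongr
        refine norm_sum_le_of_le _ fun i hi => ?_
        rw [norm_mul, norm_pow]
        gcongr
        exact hc i (Finset.mem_range.1 hi)
    _ = M * (1 - ‖z‖ ^ N) := by rw [← Finset.mul_sum, mul_left_comm, mul_neg_geom_sum]
    _ ≤ M := mul_le_of_le_one_right hM (sub_le_self 1 (by positivity))

lemma norm_discPoint_le_one {u : ℂ} (hu : ‖u‖ ≤ 1) : ‖discPoint u‖ ≤ 1 := by
  rw [discPoint, norm_div]
  exact div_le_one_of_le₀ (hu.trans (one_le_norm_two_sub hu)) (norm_nonneg _)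

lemma norm_one_sub_discPoint_sq_le {u : ℂ} (hu : ‖u‖ ≤ 1) :
    ‖1 - discPoint u‖ ^ 2 ≤ 4 * (1 - ‖discPoint u‖) := by
  have hx1 : ‖discPoint u‖ ≤ 1 := norm_discPoint_le_one hu
  have h2 : 0 < ‖2 - u‖ := one_pos.trans_le (one_le_norm_two_sub hu)
  have hsq : ‖1 - discPoint u‖ ^ 2 ≤ 2 * (1 - ‖discPoint u‖ ^ 2) := by
    have h1 : 1 - discPoint u = 2 * (1 - u) / (2 - u) := by
      have := two_sub_ne_zero hu
      rw [discPoint]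
      field_simp
      ring
    have hdiff : ‖2 - u‖ ^ 2 * (2 * (1 - ‖discPoint u‖ ^ 2) - ‖1 - discPoint u‖ ^ 2) =
        4 * (1 - ‖u‖ ^ 2) := by
      rw [h1, discPoint, norm_div, norm_div, norm_mul, Complex.norm_ofNat]
      field_simp
      simp only [← normSq_eq_norm_sq, normSq_apply, sub_re, sub_im, one_re, one_im, re_ofNat,
        im_ofNat]
      ring
    refine sub_nonneg.1 (nonneg_of_mul_nonneg_right (hdiff ▸ ?_) (pow_pos h2 2))
    linarith [one_sub_norm_sq_nonneg hu]
  nlinarith [norm_nonneg (discPoint u)]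

lemma analyticOnNhd_discPoint : AnalyticOnNhd ℂ discPoint (closedBall 0 1) := by
  intro u hu
  unfold discPoint
  exact AnalyticAt.fun_div (by fun_prop) (by fun_prop)
    (two_sub_ne_zero (mem_closedBall_zero_iff.1 hu))

section NormalizedPullback

variable {M : ℝ} {g : ℂ → ℂ}

/-- The pullback of `g` along `discPoint`, multiplied by `(1 - x) ^ 2 / (4 * M)`. This factor
cancels a pole at `x = 1`: a function of growth at most `M / (1 - ‖x‖)` pulls back to a function
bounded by `1` on the unit disc. -/
noncomputable def normalizedPullback (M : ℝ) (g : ℂ → ℂ) (u : ℂ) : ℂ :=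
  ((4 * M)⁻¹ : ℝ) * (1 - discPoint u) ^ 2 * g (discPoint u)

lemma norm_normalizedPullback (hM : 0 ≤ M) (g : ℂ → ℂ) (u : ℂ) :
    ‖normalizedPullback M g u‖ = (4 * M)⁻¹ * ‖1 - discPoint u‖ ^ 2 * ‖g (discPoint u)‖ := by
  rw [normalizedPullback, norm_mul, norm_mul, norm_pow, norm_real,
    Real.norm_of_nonneg (by positivity)]

lemma norm_normalizedPullback_le_one (hM : 0 < M)
    (hg : ∀ z ∈ closedBall (0 : ℂ) 1, (1 - ‖z‖) * ‖g z‖ ≤ M) {u : ℂ} (hu : ‖u‖ ≤ 1) :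
    ‖normalizedPullback M g u‖ ≤ 1 := by
  calc ‖normalizedPullback M g u‖
      ≤ (4 * M)⁻¹ * (4 * (1 - ‖discPoint u‖)) * ‖g (discPoint u)‖ := by
        rw [norm_normalizedPullback hM.le]
        gcongr
        exact norm_one_sub_discPoint_sq_le hu
    _ = (4 * M)⁻¹ * 4 * ((1 - ‖discPoint u‖) * ‖g (discPoint u)‖) := by ring
    _ ≤ (4 * M)⁻¹ * 4 * M := by
        gcongr
        exact hg _ (mem_closedBall_zero_iff.2 (norm_discPoint_le_one hu))
    _ = 1 := by field_simp

lemma analyticOnNhd_normalizedPullback (hg : AnalyticOnNhd ℂ g (closedBall 0 1)) :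
    AnalyticOnNhd ℂ (normalizedPullback M g) (closedBall 0 1) := fun u hu => by
  have hx := analyticOnNhd_discPoint u hu
  have hgx := (hg _ (mem_closedBall_zero_iff.2
    (norm_discPoint_le_one (mem_closedBall_zero_iff.1 hu)))).comp hx
  exact (analyticAt_const.mul ((analyticAt_const.sub hx).pow 2)).mul hgx

lemma log_norm_normalizedPullback_discCoord_le (hM : 1 ≤ M) {x : ℝ} (hx : x ∈ Ico (0 : ℝ) 1) :
    Real.log ‖normalizedPullback M g (discCoord x)‖ ≤ Real.log ‖g x‖ := by
  have hx1 : 0 < 1 - x := sub_pos.2 hx.2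
  have hnorm : ‖(1 - x : ℂ)‖ = 1 - x := by
    rw [← ofReal_one, ← ofReal_sub, norm_real, Real.norm_of_nonneg hx1.le]
  rw [norm_normalizedPullback (by linarith), discPoint_discCoord (by linarith [hx.1]), hnorm]
  rcases eq_or_ne (g x) 0 with hgx | hgx
  · rw [hgx, norm_zero, mul_zero]
  · have hgx' : 0 < ‖g x‖ := norm_pos_iff.2 hgx
    refine Real.log_le_log (by positivity) (mul_le_of_le_one_left hgx'.le ?_)
    exact mul_le_one₀ (inv_le_one_of_one_le₀ (by linarith)) (sq_nonneg _)
      (pow_le_one₀ hx1.le (by linarith [hx.1]))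

end NormalizedPullback

lemma intervalIntegrable_log_norm_ofReal {g : ℂ → ℂ} {p q : ℝ}
    (hg : ∀ x ∈ uIcc p q, MeromorphicAt g (x : ℝ)) :
    IntervalIntegrable (fun x : ℝ => Real.log ‖g x‖) volume p q :=
  intervalIntegrable_log_norm_comp (fun x _ => ofRealCLM.analyticAt x) hg

lemma neg_eighteen_mul_log_le_integral_log_norm {a : ℝ} (ha : a ∈ Ioc (0 : ℝ) (1 / 2)) {M : ℝ}
    {g : ℂ → ℂ} (hg : AnalyticOnNhd ℂ g (closedBall 0 1))
    (hle : ∀ z ∈ closedBall (0 : ℂ) 1, (1 - ‖z‖) * ‖g z‖ ≤ M) (hg0 : 1 ≤ ‖g 0‖) :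
    -18 * Real.log (4 * M) ≤ ∫ x in (1 - 2 * a)..(1 - a), Real.log ‖g x‖ := by
  have hM : 1 ≤ M := hg0.trans (by simpa using hle 0 (mem_closedBall_self zero_le_one))
  have hM0 : 0 < M := one_pos.trans_le hM
  set f := normalizedPullback M g
  have hf : AnalyticOnNhd ℂ f (closedBall 0 1) := analyticOnNhd_normalizedPullback hg
  have hf0 : (4 * M)⁻¹ ≤ ‖f 0‖ := by
    rw [norm_normalizedPullback hM0.le, discPoint, zero_div, sub_zero, norm_one, one_pow, mul_one]
    exact le_mul_of_one_le_right (by positivity) hg0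
  have hf0_pos : 0 < ‖f 0‖ := (by positivity : 0 < (4 * M)⁻¹).trans_le hf0
  have hab : 1 - 2 * a ≤ 1 - a := by linarith [ha.1]
  have hleft := Icc_one_sub_two_mul_subset ha (left_mem_Icc.2 hab)
  have hright := Icc_one_sub_two_mul_subset ha (right_mem_Icc.2 hab)
  have hball : ∀ {x : ℝ}, x ∈ uIcc (1 - 2 * a) (1 - a) → (x : ℂ) ∈ closedBall (0 : ℂ) 1 :=
    fun {x} hx => by
      have hx01 := uIcc_subset_Icc hleft hright hx
      rw [mem_closedBall_zero_iff, norm_real, Real.norm_of_nonneg hx01.1]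
      exact hx01.2
  calc -18 * Real.log (4 * M) = 18 * Real.log (4 * M)⁻¹ := by rw [Real.log_inv]; ring
    _ ≤ 18 * Real.log ‖f 0‖ := by gcongr
    _ ≤ ∫ x in (1 - 2 * a)..(1 - a), Real.log ‖f (discCoord x)‖ :=
        eighteen_mul_log_norm_le_integral_log_norm_discCoord ha hf
          (fun u hu => norm_normalizedPullback_le_one hM0 hle (mem_sphere_zero_iff_norm.1 hu).le)
          (norm_pos_iff.1 hf0_pos)
    _ ≤ ∫ x in (1 - 2 * a)..(1 - a), Real.log ‖g x‖ :=
        intervalIntegral.integral_mono_on hab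
          (intervalIntegrable_log_norm_discCoord hf.meromorphicOn hleft hright)
          (intervalIntegrable_log_norm_ofReal fun x hx => (hg x (hball hx)).meromorphicAt)
          fun x hx => log_norm_normalizedPullback_discCoord_le hM
            ⟨(Icc_one_sub_two_mul_subset ha hx).1, by linarith [hx.2, ha.1]⟩

lemma sum_Icc_mul_pow_eq {R : Type*} [CommSemiring R] (c : ℕ → R) (k n : ℕ) (z : R) :
    ∑ j ∈ Finset.Icc k n, c j * z ^ j =
      z ^ k * ∑ i ∈ Finset.range (n + 1 - k), c (k + i) * z ^ i := by
  rw [← Finset.Ico_add_one_right_eq_Icc, Finset.sum_Ico_eq_sum_range, Finset.mul_sum]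
  exact Finset.sum_congr rfl fun i _ => by rw [pow_add, mul_left_comm]

lemma log_pow_add_log_norm_le {p x : ℝ} (hp : 0 < p) (hpx : p ≤ x) (hp1 : p ≤ 1) (k : ℕ)
    (w : ℂ) : k * Real.log p + Real.log ‖w‖ ≤ Real.log ‖(x : ℂ) ^ k * w‖ := by
  rcases eq_or_ne w 0 with rfl | hw
  · simpa using mul_nonpos_of_nonneg_of_nonpos k.cast_nonneg (Real.log_nonpos hp.le hp1)
  · have hx : 0 < x := hp.trans_le hpx
    rw [norm_mul, norm_pow, norm_real, Real.norm_of_nonneg hx.le,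
      Real.log_mul (by positivity) (norm_ne_zero_iff.2 hw), Real.log_pow]
    gcongr

lemma mul_log_add_integral_le_integral_log_norm_pow_mul {g : ℂ → ℂ} {p q : ℝ} (hp : 0 < p)
    (hp1 : p ≤ 1) (hpq : p ≤ q) (hg : ∀ x ∈ uIcc p q, MeromorphicAt g (x : ℝ)) (k : ℕ) :
    (q - p) * (k * Real.log p) + ∫ x in p..q, Real.log ‖g x‖ ≤
      ∫ x in p..q, Real.log ‖(x : ℂ) ^ k * g x‖ := by
  have hint := intervalIntegrable_log_norm_ofReal hg
  calc (q - p) * (k * Real.log p) + ∫ x in p..q, Real.log ‖g x‖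
      = ∫ x in p..q, (k * Real.log p + Real.log ‖g x‖) := by
        rw [intervalIntegral.integral_add intervalIntegrable_const hint,
          intervalIntegral.integral_const, smul_eq_mul]
    _ ≤ ∫ x in p..q, Real.log ‖(x : ℂ) ^ k * g x‖ :=
        intervalIntegral.integral_mono_on hpq (intervalIntegrable_const.add hint)
          (intervalIntegrable_log_norm_ofReal (g := fun z => z ^ k * g z)
            fun x hx => (analyticAt_id.pow k).meromorphicAt.mul (hg x hx))
          fun x hx => log_pow_add_log_norm_le hp hx.1 hp1 k _

theorem geometric_mean_lower_bound_shifted_general {a : ℝ} (ha : a ∈ Ioo (0 : ℝ) (1 / 2))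
    {n k : ℕ} (hk : k ≤ n) {M : ℝ} {c : ℕ → ℂ} (hc : ∀ j ∈ Finset.Icc k n, ‖c j‖ ≤ M)
    (hck : 1 ≤ ‖c k‖) :
    (1 - 2 * a) ^ k * Real.exp (-18 * Real.log (4 * M) / a) ≤
      Real.exp ((1 / a) * ∫ x in (1 - 2 * a)..(1 - a),
        Real.log ‖∑ j ∈ Finset.Icc k n, c j * (x : ℂ) ^ j‖) := by
  have ha0 : 0 < a := ha.1
  have hpos : 0 < 1 - 2 * a := by linarith [ha.2]
  have hM : 0 ≤ M := (norm_nonneg _).trans (hc k (Finset.left_mem_Icc.2 hk))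
  set Q : ℂ → ℂ := fun z => ∑ i ∈ Finset.range (n + 1 - k), c (k + i) * z ^ i with hQdef
  have hQ : ∀ z, AnalyticAt ℂ Q z := fun z => by fun_prop
  have hQ0 : 1 ≤ ‖Q 0‖ := by
    simpa [hQdef, zero_pow_eq, Nat.lt_succ_of_le hk] using hck
  have hQint : -18 * Real.log (4 * M) ≤ ∫ x in (1 - 2 * a)..(1 - a), Real.log ‖Q x‖ :=
    neg_eighteen_mul_log_le_integral_log_norm ⟨ha0, ha.2.le⟩ (fun z _ => hQ z)
      (fun z hz => one_sub_norm_mul_norm_sum_le hM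
        (fun i hi => hc _ (Finset.mem_Icc.2 (by omega))) (mem_closedBall_zero_iff.1 hz)) hQ0
  have hpow := mul_log_add_integral_le_integral_log_norm_pow_mul hpos (by linarith)
    (by linarith : 1 - 2 * a ≤ 1 - a) (fun x _ => (hQ x).meromorphicAt) k
  rw [← Real.exp_log (pow_pos hpos k), ← Real.exp_add, Real.exp_le_exp, Real.log_pow]
  simp only [sum_Icc_mul_pow_eq]
  calc k * Real.log (1 - 2 * a) + -18 * Real.log (4 * M) / a
      = 1 / a * ((1 - a - (1 - 2 * a)) * (k * Real.log (1 - 2 * a)) + -18 * Real.log (4 * M)) := by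
        field_simp
        ring
    _ ≤ 1 / a * ∫ x in (1 - 2 * a)..(1 - a), Real.log ‖(x : ℂ) ^ k * Q x‖ := by
        gcongr
        linarith

lemma eighteen_le_nine_mul_pi_div_sqrt_two : 18 ≤ 9 * Real.pi / √2 := by
  rw [le_div_iff₀ (by positivity)]
  have : √2 ≤ 1.5 := Real.sqrt_le_iff.2 (by norm_num)
  linarith [Real.pi_gt_three]

lemma norm_ofReal_mul_le {A b M : ℝ} (hA : A ∈ Icc (0 : ℝ) M) (hb : b = -1 ∨ b = 0 ∨ b = 1) :
    ‖((b * A : ℝ) : ℂ)‖ ≤ M := by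
  have hb1 : ‖b‖ ≤ 1 := by rcases hb with rfl | rfl | rfl <;> simp
  rw [norm_real, norm_mul, Real.norm_of_nonneg hA.1]
  exact (mul_le_of_le_one_left hA.1 hb1).trans hA.2

lemma one_le_norm_ofReal_mul {A b : ℝ} (hA : 1 ≤ A) (hb : b = -1 ∨ b = 1) :
    1 ≤ ‖((b * A : ℝ) : ℂ)‖ := by
  have hb1 : ‖b‖ = 1 := by rcases hb with rfl | rfl <;> simp
  rwa [norm_real, norm_mul, hb1, one_mul, Real.norm_of_nonneg (zero_le_one.trans hA)]

/-- Geometric-mean lower bound for polynomials starting at degree `k`: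
`‖P‖_{L_0(I_a)} ≥ (1-2a)^k exp(-c₁ log(4M)/a)` with `c₁ = 9π/√2`
for `P(x) = ∑_{j=k}^n b_j a_j x^j` with `a_j ∈ [1,M]`, `b_j ∈ {-1,0,1}`, `b_k ∈ {-1,1}`. -/
theorem geometric_mean_lower_bound_shifted (a : ℝ) (ha : a ∈ Set.Ioc (0 : ℝ) (1 / 3))
    (n k : ℕ) (hk : k ≤ n) (M : ℝ) (hM : 1 ≤ M)
    (A b : ℕ → ℝ)
    (hA : ∀ j ∈ Finset.Icc k n, A j ∈ Set.Icc (1 : ℝ) M)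
    (hb : ∀ j ∈ Finset.Icc k n, b j = -1 ∨ b j = 0 ∨ b j = 1)
    (hbk : b k = -1 ∨ b k = 1) :
    Real.exp ((1 / a) * ∫ x in (1 - 2 * a)..(1 - a),
        Real.log |∑ j ∈ Finset.Icc k n, b j * A j * x ^ j|) ≥
      (1 - 2 * a) ^ k * Real.exp (-(9 * Real.pi / Real.sqrt 2) * Real.log (4 * M) / a) := by
  have hpos : 0 ≤ 1 - 2 * a := by linarith [ha.2]
  have hlog : 0 ≤ Real.log (4 * M) := Real.log_nonneg (by linarith)
  calc (1 - 2 * a) ^ k * Real.exp (-(9 * Real.pi / √2) * Real.log (4 * M) / a)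
      ≤ (1 - 2 * a) ^ k * Real.exp (-18 * Real.log (4 * M) / a) := by
        gcongr
        · exact ha.1.le
        · exact eighteen_le_nine_mul_pi_div_sqrt_two
    _ ≤ _ := geometric_mean_lower_bound_shifted_general ⟨ha.1, by linarith [ha.2]⟩ hk
        (c := fun j => ((b j * A j : ℝ) : ℂ)) (fun j hj =>
          norm_ofReal_mul_le (Icc_subset_Icc_left zero_le_one (hA j hj)) (hb j hj))
        (one_le_norm_ofReal_mul (hA k (Finset.left_mem_Icc.2 hk)).1 hbk)
    _ = _ := by norm_cast
end

section
/- Let n ≥ 1 and 1 ≤ m ≤ n be integers, M ≥ 1, a ∈ (0, 1/3], and let a_0, a_1, …, a_n ∈ [1, M]. Then there exist two distinct tuples (d_0, …, d_n) and (d_0^*, …, d_n^*) with d_j, d_j^* ∈ {0, 1} such that the nonzero polynomial P(x) := Σ_{j=0}^{n} (d_j − d_j^*) a_j x^j, whose coefficients b_j := d_j − d_j^* lie in {−1, 0, 1}, satisfies | ∫_0^1 P(1 − a − a x) · x^j dx | ≤ 2(n+1)M·2^{−n/m} for every j = 0, 1, …, m−1. -/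
/-!
The subset sums of the moment vectors of `n + 1` bounded functions lie in a box in `ℝ ^ m` whose
sides are at most the sum of the absolute values of the moments. Cutting each side into
`K = ⌊2 ^ (n / m)⌋` equal pieces gives `K ^ m ≤ 2 ^ n < 2 ^ (n + 1)` cells, so two subsets share a
cell, and `1 / K ≤ 2 * 2 ^ (-n / m)`.
-/

open MeasureTheory Set

theorem exists_lt_mem_Icc_succ {α : Type*} [LinearOrder α] {f : ℕ → α} {K : ℕ} (hK : 0 < K)
    {x : α} (hx : x ∈ Icc (f 0) (f K)) : ∃ k < K, x ∈ Icc (f k) (f (k + 1)) := by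
  induction K, hK using Nat.le_induction with
  | base => exact ⟨0, Nat.one_pos, hx⟩
  | succ K _ ih =>
    rcases le_total x (f K) with hxK | hxK
    · obtain ⟨k, hk, hxk⟩ := ih ⟨hx.1, hxK⟩
      exact ⟨k, hk.trans K.lt_succ_self, hxk⟩
    · exact ⟨K, K.lt_succ_self, hxK, hx.2⟩

theorem sum_mem_Icc_neg_sum_negPart_sum_posPart {ι α : Type*} [Fintype ι]
    [Lattice α] [AddCommGroup α] [IsOrderedAddMonoid α] (c : ι → α) (s : Finset ι) :
    ∑ i ∈ s, c i ∈ Icc (-∑ i, (c i)⁻) (∑ i, (c i)⁺) := by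
  constructor
  · calc -∑ i, (c i)⁻ ≤ -∑ i ∈ s, (c i)⁻ :=
          neg_le_neg (Finset.sum_le_univ_sum_of_nonneg fun i ↦ negPart_nonneg (c i))
      _ = ∑ i ∈ s, -(c i)⁻ := Finset.sum_neg_distrib _ |>.symm
      _ ≤ ∑ i ∈ s, c i := Finset.sum_le_sum fun i _ ↦ neg_le.1 (neg_le_negPart (c i))
  · calc ∑ i ∈ s, c i ≤ ∑ i ∈ s, (c i)⁺ := Finset.sum_le_sum fun i _ ↦ le_posPart (c i)
      _ ≤ ∑ i, (c i)⁺ := Finset.sum_le_univ_sum_of_nonneg fun i ↦ posPart_nonneg (c i)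

section Pigeonhole

variable {ι κ R : Type*} [Fintype κ] [Field R] [LinearOrder R] [IsStrictOrderedRing R]

theorem exists_fin_mem_Icc_add_mul_div {K : ℕ} (hK : 0 < K) {l u x : R} (hx : x ∈ Icc l u) :
    ∃ k : Fin K, x ∈ Icc (l + k * ((u - l) / K)) (l + (k + 1) * ((u - l) / K)) := by
  have hx' : x ∈ Icc (l + (0 : ℕ) * ((u - l) / K)) (l + K * ((u - l) / K)) := by
    rwa [Nat.cast_zero, zero_mul, add_zero, mul_div_cancel₀ _ (Nat.cast_ne_zero.2 hK.ne'),
      add_sub_cancel]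
  obtain ⟨k, hk, hxk⟩ :=
    exists_lt_mem_Icc_succ (f := fun k : ℕ ↦ l + k * ((u - l) / K)) hK hx'
  exact ⟨⟨k, hk⟩, by simpa only [Nat.cast_succ] using hxk⟩

theorem exists_ne_forall_abs_sub_le_div_of_pow_lt_card [Fintype ι] {K : ℕ} (hK : 0 < K)
    (hcard : K ^ Fintype.card κ < Fintype.card ι) {v : ι → κ → R} {l u : κ → R}
    (hv : ∀ i j, v i j ∈ Icc (l j) (u j)) :
    ∃ i i', i ≠ i' ∧ ∀ j, |v i j - v i' j| ≤ (u j - l j) / K := by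
  classical
  choose cell hcell using fun i j ↦ exists_fin_mem_Icc_add_mul_div hK (hv i j)
  obtain ⟨i, i', hne, hsame⟩ := Fintype.exists_ne_map_eq_of_card_lt cell (by simpa using hcard)
  refine ⟨i, i', hne, fun j ↦ ?_⟩
  obtain ⟨hl, hu⟩ := hcell i j
  obtain ⟨hl', hu'⟩ := hcell i' j
  rw [hsame] at hl hu
  rw [abs_sub_le_iff]
  constructor <;> linarith

theorem exists_ne_forall_abs_sum_sub_sum_le_div [Fintype ι] {K : ℕ} (hK : 0 < K)
    (hcard : K ^ Fintype.card κ < 2 ^ Fintype.card ι) (c : ι → κ → R) :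
    ∃ s t : Finset ι, s ≠ t ∧
      ∀ j, |∑ i ∈ s, c i j - ∑ i ∈ t, c i j| ≤ (∑ i, |c i j|) / K := by
  obtain ⟨s, t, hne, hst⟩ := exists_ne_forall_abs_sub_le_div_of_pow_lt_card hK
    (by rwa [Fintype.card_finset])
    fun (s : Finset ι) j ↦ sum_mem_Icc_neg_sum_negPart_sum_posPart (c · j) s
  refine ⟨s, t, hne, fun j ↦ (hst j).trans_eq ?_⟩
  simp only [sub_neg_eq_add, ← Finset.sum_add_distrib, posPart_add_negPart]

end Pigeonhole

theorem floor_rpow_div_pow_le {r : ℝ} (hr : 0 ≤ r) (n : ℕ) {m : ℕ} (hm : m ≠ 0) :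
    (⌊r ^ (n / m : ℝ)⌋₊ : ℝ) ^ m ≤ r ^ n :=
  calc (⌊r ^ (n / m : ℝ)⌋₊ : ℝ) ^ m ≤ (r ^ (n / m : ℝ)) ^ m := by
        gcongr
        exact Nat.floor_le (Real.rpow_nonneg hr _)
    _ = r ^ n := by
        rw [← Real.rpow_mul_natCast hr, div_mul_cancel₀ _ (Nat.cast_ne_zero.2 hm),
          Real.rpow_natCast]

theorem inv_floor_le_two_mul_inv {r : ℝ} (hr : 1 ≤ r) : (⌊r⌋₊ : ℝ)⁻¹ ≤ 2 * r⁻¹ :=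
  calc (⌊r⌋₊ : ℝ)⁻¹ ≤ (r / 2)⁻¹ :=
        inv_anti₀ (by positivity) (Nat.div_two_lt_floor hr).le
    _ = 2 * r⁻¹ := by rw [inv_div, div_eq_mul_inv]

theorem exists_ne_forall_abs_sum_sub_sum_le_two_rpow {ι κ : Type*} [Fintype ι] [Fintype κ]
    [Nonempty κ] {n : ℕ} (hn : n < Fintype.card ι) (c : ι → κ → ℝ) :
    ∃ s t : Finset ι, s ≠ t ∧ ∀ j, |∑ i ∈ s, c i j - ∑ i ∈ t, c i j| ≤
      2 * (∑ i, |c i j|) * 2 ^ (-n / Fintype.card κ : ℝ) := by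
  set r : ℝ := 2 ^ (n / Fintype.card κ : ℝ) with hr
  have one_le_r : 1 ≤ r := Real.one_le_rpow one_le_two (by positivity)
  have cells_le : ⌊r⌋₊ ^ Fintype.card κ ≤ 2 ^ n := by
    exact_mod_cast floor_rpow_div_pow_le zero_le_two n Fintype.card_ne_zero
  obtain ⟨s, t, hne, hst⟩ := exists_ne_forall_abs_sum_sub_sum_le_div (Nat.floor_pos.2 one_le_r)
    (cells_le.trans_lt (Nat.pow_lt_pow_right one_lt_two hn)) c
  refine ⟨s, t, hne, fun j ↦ ?_⟩
  calc |∑ i ∈ s, c i j - ∑ i ∈ t, c i j| ≤ (∑ i, |c i j|) * (⌊r⌋₊ : ℝ)⁻¹ := hst j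
    _ ≤ (∑ i, |c i j|) * (2 * r⁻¹) := by gcongr; exact inv_floor_le_two_mul_inv one_le_r
    _ = 2 * (∑ i, |c i j|) * 2 ^ (-n / Fintype.card κ : ℝ) := by
      rw [neg_div, Real.rpow_neg zero_le_two, ← hr]
      ring

theorem abs_mul_pow_le_of_abs_le_one {R : Type*} [CommRing R] [LinearOrder R]
    [IsStrictOrderedRing R] {b x M : R} (hb : |b| ≤ M) (hx : |x| ≤ 1) (j : ℕ) :
    |b * x ^ j| ≤ M := by
  rw [abs_mul, abs_pow]
  exact (mul_le_of_le_one_right (abs_nonneg b) (pow_le_one₀ (abs_nonneg x) hx)).trans hb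

theorem abs_integral_mul_pow_le {f : ℝ → ℝ} {M : ℝ} (hf : ∀ x ∈ Icc (0 : ℝ) 1, |f x| ≤ M)
    (j : ℕ) : |∫ x in (0 : ℝ)..1, f x * x ^ j| ≤ M := by
  have bound : ∀ x ∈ uIoc (0 : ℝ) 1, ‖f x * x ^ j‖ ≤ M := fun x hx ↦ by
    rw [uIoc_of_le zero_le_one] at hx
    exact abs_mul_pow_le_of_abs_le_one (hf x (Ioc_subset_Icc_self hx))
      (abs_le.2 ⟨by linarith [hx.1], hx.2⟩) j
  simpa using intervalIntegral.norm_integral_le_of_norm_le_const bound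

theorem integral_sum_mul_mul {ι : Type*} [Fintype ι] {a b : ℝ} {μ : Measure ℝ} {f : ι → ℝ → ℝ}
    {g : ℝ → ℝ} (hfg : ∀ i, IntervalIntegrable (fun x ↦ f i x * g x) μ a b) (w : ι → ℝ) :
    ∫ x in a..b, (∑ i, w i * f i x) * g x ∂μ = ∑ i, w i * ∫ x in a..b, f i x * g x ∂μ := by
  simp only [Finset.sum_mul, mul_assoc]
  rw [intervalIntegral.integral_finsetSum fun i _ ↦ (hfg i).const_mul (w i)]
  simp only [intervalIntegral.integral_const_mul]

theorem sum_indicator_sub_indicator_mul {ι R : Type*} [Fintype ι] [NonAssocRing R] (s t : Finset ι)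
    (c : ι → R) :
    ∑ i, ((s : Set ι).indicator 1 i - (t : Set ι).indicator 1 i) * c i =
      ∑ i ∈ s, c i - ∑ i ∈ t, c i := by
  classical
  simp [sub_mul, indicator_apply]

theorem abs_one_sub_sub_mul_le_one {R : Type*} [CommRing R] [LinearOrder R]
    [IsStrictOrderedRing R] {a x : R} (ha : a ∈ Icc 0 1) (hx : x ∈ Icc 0 1) :
    |1 - a - a * x| ≤ 1 := by
  have mul_x_nonneg : 0 ≤ a * x := mul_nonneg ha.1 hx.1
  have mul_x_le : a * x ≤ a := mul_le_of_le_one_right ha.1 hx.2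
  rw [abs_le]
  constructor <;> linarith [ha.1, ha.2]

theorem pigeonhole_moments_general {ι : Type*} [Fintype ι] {n m : ℕ} (hn : n < Fintype.card ι)
    (hm : 1 ≤ m) {f : ι → ℝ → ℝ} (hf : ∀ i, IntervalIntegrable (f i) volume 0 1) {M : ℝ}
    (hM : ∀ i, ∀ x ∈ Icc (0 : ℝ) 1, |f i x| ≤ M) :
    ∃ d dstar : ι → ℝ,
      (∀ i, d i = 0 ∨ d i = 1) ∧ (∀ i, dstar i = 0 ∨ dstar i = 1) ∧ d ≠ dstar ∧
      ∀ j < m, |∫ x in (0 : ℝ)..1, (∑ i, (d i - dstar i) * f i x) * x ^ j| ≤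
        2 * Fintype.card ι * M * 2 ^ (-n / m : ℝ) := by
  have : NeZero m := .of_pos hm
  let c (i : ι) (j : Fin m) : ℝ := ∫ x in (0 : ℝ)..1, f i x * x ^ (j : ℕ)
  obtain ⟨s, t, hne, hst⟩ := exists_ne_forall_abs_sum_sub_sum_le_two_rpow hn c
  refine ⟨(s : Set ι).indicator 1, (t : Set ι).indicator 1, indicator_eq_zero_or_self _ 1,
    indicator_eq_zero_or_self _ 1,
    fun h ↦ hne (Finset.coe_injective (indicator_one_inj ℝ h)), fun j hj ↦ ?_⟩
  have sum_abs_le : ∑ i, |c i ⟨j, hj⟩| ≤ Fintype.card ι * M := by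
    simpa using Finset.sum_le_card_nsmul Finset.univ _ M
      fun i _ ↦ abs_integral_mul_pow_le (hM i) j
  rw [integral_sum_mul_mul fun i ↦ (hf i).mul_continuousOn (by fun_prop),
    sum_indicator_sub_indicator_mul]
  calc |∑ i ∈ s, c i ⟨j, hj⟩ - ∑ i ∈ t, c i ⟨j, hj⟩|
      ≤ 2 * (∑ i, |c i ⟨j, hj⟩|) * 2 ^ (-n / m : ℝ) := by
        simpa only [Fintype.card_fin] using hst ⟨j, hj⟩
    _ ≤ 2 * (Fintype.card ι * M) * 2 ^ (-n / m : ℝ) := by gcongr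
    _ = 2 * Fintype.card ι * M * 2 ^ (-n / m : ℝ) := by ring

/-- Pigeonhole step: there are two distinct `{0,1}`-tuples `d, d*` such that the nonzero
polynomial `P(x) = ∑ (d_j - d*_j) a_j x^j` has all its first `m` moments (after the affine
substitution `x ↦ 1 - a - a x`) bounded by `2(n+1)M·2^{-n/m}`. -/
theorem pigeonhole_moments (n m : ℕ) (hn : 1 ≤ n) (hm : 1 ≤ m) (hmn : m ≤ n)
    (M : ℝ) (hM : 1 ≤ M) (a : ℝ) (ha : a ∈ Set.Ioc (0 : ℝ) (1 / 3))
    (A : Fin (n + 1) → ℝ) (hA : ∀ j, A j ∈ Set.Icc (1 : ℝ) M) :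
    ∃ d dstar : Fin (n + 1) → ℝ,
      (∀ j, d j = 0 ∨ d j = 1) ∧ (∀ j, dstar j = 0 ∨ dstar j = 1) ∧ d ≠ dstar ∧
      ∀ j < m,
        |∫ x in (0 : ℝ)..1,
            (∑ i : Fin (n + 1), (d i - dstar i) * A i * (1 - a - a * x) ^ (i : ℕ)) * x ^ j| ≤
          2 * ((n : ℝ) + 1) * M * (2 : ℝ) ^ (-(n : ℝ) / (m : ℝ)) := by
  have ha' : a ∈ Icc (0 : ℝ) 1 := ⟨ha.1.le, ha.2.trans (by norm_num)⟩
  have hA' (i) : |A i| ≤ M := (abs_of_nonneg (zero_le_one.trans (hA i).1)).trans_le (hA i).2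
  simpa only [Fintype.card_fin, Nat.cast_succ, ← mul_assoc] using
    pigeonhole_moments_general (n.lt_succ_self.trans_eq (Fintype.card_fin _).symm) hm
      (fun i ↦ Continuous.intervalIntegrable (by fun_prop) 0 1) fun i x hx ↦
        abs_mul_pow_le_of_abs_le_one (hA' i) (abs_one_sub_sub_mul_le_one ha' hx) i
end
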